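/- Let a < b be real numbers and 1 < α < 2. Let σ̲, σ̄ : [a,b] → ℝ be functions in C¹[a,b] with absolutely continuous first derivatives, twice differentiable on (a,b), such that σ̲(t) ≤ σ̄(t) for all t ∈ [a,b]. Let E = {(t,x) ∈ [a,b] × ℝ : σ̲(t) ≤ x ≤ σ̄(t)} and let f : [a,b] × ℝ → ℝ be continuous on E. Assume σ̲ is a lower solution: (t−a)^{2−α}·σ̲''(t) + f(t, σ̲(t)) ≥ 0 for all t ∈ (a,b), σ̲(a) ≤ 0, σ̲(b) ≤ 0; and σ̄ is an upper solution: (t−a)^{2−α}·σ̄''(t) + f(t, σ̄(t)) ≤ 0 for all t ∈ (a,b), σ̄(a) ≥ 0, σ̄(b) ≥ 0. Then there exists a function u : [a,b] → ℝ in C¹[a,b] with u' absolutely continuous, twice differentiable on (a,b), such that (t−a)^{2−α}·u''(t) + f(t, u(t)) = 0 for all t ∈ (a,b), u(a) = u(b) = 0, and σ̲(t) ≤ u(t) ≤ σ̄(t) for all t ∈ [a,b]. -/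

import Mathlib

/-!
Divide the equation by the weight and project the state argument of the nonlinearity onto
`[σl t, σu t]`. The new right-hand side is dominated by a multiple of `(t - a) ^ (α - 2)`, which is
integrable because `1 < α`. The Dirichlet problem for it is solved by shooting with a delayed
argument: a positive delay makes the initial value problem explicitly solvable, with an end value
depending continuously on the initial slope, and Arzelà–Ascoli lets the delay tend to zero.
If the solution left `[σl t, σu t]`, comparing its second derivative there with that of the barrier
it crossed would contradict the maximum principle; so it stays, and the projection is the identity.
-/

open Set Filter Topology MeasureTheory intervalIntegral

section Clamp

variable {lo hi x : ℝ}

/-- The projection of `x` onto `[lo, hi]`. Unlike for `Set.projIcc`, no proof of `lo ≤ hi` is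
carried along, so the end points may vary with a parameter. -/
noncomputable def clamp (lo hi x : ℝ) : ℝ := max lo (min hi x)

lemma clamp_mem_Icc (h : lo ≤ hi) (x : ℝ) : clamp lo hi x ∈ Icc lo hi :=
  ⟨le_max_left _ _, max_le h (min_le_left _ _)⟩

lemma clamp_of_mem_Icc (hx : x ∈ Icc lo hi) : clamp lo hi x = x := by
  rw [clamp, min_eq_right hx.2, max_eq_right hx.1]

lemma clamp_of_le_left (hx : x ≤ lo) : clamp lo hi x = lo :=
  max_eq_left ((min_le_right _ _).trans hx)

lemma clamp_of_right_le (h : lo ≤ hi) (hx : hi ≤ x) : clamp lo hi x = hi := by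
  rw [clamp, min_eq_left hx, max_eq_right h]

lemma continuous_clamp : Continuous (clamp lo hi) :=
  continuous_const.max (continuous_const.min continuous_id)

end Clamp

section IvpSolution

variable {a b A s t : ℝ} {q k : ℝ → ℝ}

/-- The solution of the initial value problem `u'' = -q`, `u a = A`, `u' a = s`. -/
noncomputable def ivpSolution (a A s : ℝ) (q : ℝ → ℝ) (t : ℝ) : ℝ :=
  A + s * (t - a) - ∫ τ in a..t, ∫ r in a..τ, q r

lemma ivpSolution_left : ivpSolution a A s q a = A := by
  simp [ivpSolution]

lemma ivpSolution_congr {q' : ℝ → ℝ} (hat : a ≤ t) (h : EqOn q q' (Icc a t)) :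
    ivpSolution a A s q t = ivpSolution a A s q' t := by
  have hinner : EqOn (fun τ => ∫ r in a..τ, q r) (fun τ => ∫ r in a..τ, q' r) (uIcc a t) := by
    intro τ hτ
    rw [uIcc_of_le hat] at hτ
    refine integral_congr fun r hr => h ?_
    rw [uIcc_of_le hτ.1] at hr
    exact ⟨hr.1, hr.2.trans hτ.2⟩
  rw [ivpSolution, ivpSolution, integral_congr hinner]

lemma abs_intervalIntegral_le_of_abs_le (hk : Integrable k) (hqk : ∀ r, |q r| ≤ k r) (t : ℝ) :
    |∫ r in a..t, q r| ≤ ∫ r, k r :=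
  calc |∫ r in a..t, q r|
      = |∫ r in uIoc a t, q r| := norm_integral_eq_norm_integral_uIoc q
    _ ≤ ∫ r in uIoc a t, k r :=
        norm_integral_le_of_norm_le (f := q) hk.integrableOn (Eventually.of_forall hqk)
    _ ≤ ∫ r, k r :=
        setIntegral_le_integral hk (Eventually.of_forall fun r => (abs_nonneg _).trans (hqk r))

lemma abs_ivpSolution_sub_le (hk : Integrable k) (hqk : ∀ r, |q r| ≤ k r) (t : ℝ) :
    |ivpSolution a A s q t - (A + s * (t - a))| ≤ (∫ r, k r) * |t - a| := by
  rw [ivpSolution, sub_sub_cancel_left, abs_neg, ← Real.norm_eq_abs]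
  exact norm_integral_le_of_norm_le_const fun τ _ => abs_intervalIntegral_le_of_abs_le hk hqk τ

lemma hasDerivAt_ivpSolution (hq : Integrable q) (t : ℝ) :
    HasDerivAt (ivpSolution a A s q) (s - ∫ r in a..t, q r) t := by
  have hcont : Continuous fun τ => ∫ r in a..τ, q r :=
    continuous_primitive (fun _ _ => hq.intervalIntegrable) a
  have hlin : HasDerivAt (fun t => A + s * (t - a)) s t := by
    simpa using (((hasDerivAt_id t).sub_const a).const_mul s).const_add A
  exact hlin.sub (integral_hasDerivAt_right (hcont.intervalIntegrable _ _)
    (hcont.stronglyMeasurableAtFilter _ _) hcont.continuousAt)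

lemma deriv_ivpSolution (hq : Integrable q) :
    deriv (ivpSolution a A s q) = fun t => s - ∫ r in a..t, q r :=
  funext fun t => (hasDerivAt_ivpSolution hq t).deriv

lemma contDiff_ivpSolution (hq : Integrable q) : ContDiff ℝ 1 (ivpSolution a A s q) := by
  refine contDiff_one_iff_deriv.2 ⟨fun t => (hasDerivAt_ivpSolution hq t).differentiableAt, ?_⟩
  rw [deriv_ivpSolution hq]
  exact continuous_const.sub (continuous_primitive (fun _ _ => hq.intervalIntegrable) a)

lemma lipschitzWith_ivpSolution (hq : Integrable q) (hk : Integrable k)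
    (hqk : ∀ r, |q r| ≤ k r) :
    LipschitzWith (|s| + ∫ r, k r).toNNReal (ivpSolution a A s q) := by
  refine lipschitzWith_of_nnnorm_deriv_le
    (fun t => (hasDerivAt_ivpSolution hq t).differentiableAt) fun t => ?_
  rw [(hasDerivAt_ivpSolution hq t).deriv, ← norm_toNNReal]
  exact Real.toNNReal_mono ((norm_sub_le _ _).trans
    (add_le_add_right (abs_intervalIntegral_le_of_abs_le hk hqk t) _))

lemma tendsto_ivpSolution {ι : Type*} {l : Filter ι} [l.IsCountablyGenerated]
    {S : ι → ℝ} {Q : ι → ℝ → ℝ} (hQ : ∀ i, Integrable (Q i)) (hk : Integrable k)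
    (hQk : ∀ i r, |Q i r| ≤ k r) (hS : Tendsto S l (𝓝 s))
    (hlim : ∀ r, Tendsto (fun i => Q i r) l (𝓝 (q r))) (t : ℝ) :
    Tendsto (fun i => ivpSolution a A (S i) (Q i) t) l (𝓝 (ivpSolution a A s q t)) := by
  have hinner (τ : ℝ) : Tendsto (fun i => ∫ r in a..τ, Q i r) l (𝓝 (∫ r in a..τ, q r)) :=
    tendsto_integral_filter_of_dominated_convergence k
      (Eventually.of_forall fun i => (hQ i).aestronglyMeasurable.restrict)
      (Eventually.of_forall fun i => Eventually.of_forall fun r _ => hQk i r)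
      hk.intervalIntegrable (Eventually.of_forall fun r _ => hlim r)
  have houter : Tendsto (fun i => ∫ τ in a..t, ∫ r in a..τ, Q i r) l
      (𝓝 (∫ τ in a..t, ∫ r in a..τ, q r)) :=
    tendsto_integral_filter_of_dominated_convergence (fun _ => ∫ r, k r)
      (Eventually.of_forall fun i => (continuous_primitive
        (fun _ _ => (hQ i).intervalIntegrable) a).aestronglyMeasurable)
      (Eventually.of_forall fun i => Eventually.of_forall fun τ _ =>
        abs_intervalIntegral_le_of_abs_le hk (hQk i) τ)
      intervalIntegrable_const (Eventually.of_forall fun τ _ => hinner τ)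
  exact (tendsto_const_nhds.add (hS.mul_const _)).sub houter

lemma hasDerivAt_deriv_ivpSolution (hq : Integrable q) (hqt : ContinuousAt q t) :
    HasDerivAt (deriv (ivpSolution a A s q)) (-q t) t := by
  rw [deriv_ivpSolution hq]
  exact (integral_hasDerivAt_right hq.intervalIntegrable
    hq.aestronglyMeasurable.stronglyMeasurableAtFilter hqt).const_sub s

lemma differentiableOn_deriv_ivpSolution (hq : Integrable q) (hqc : ContinuousOn q (Ioo a b)) :
    DifferentiableOn ℝ (deriv (ivpSolution a A s q)) (Ioo a b) := fun _ ht =>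
  (hasDerivAt_deriv_ivpSolution hq
    (hqc.continuousAt (isOpen_Ioo.mem_nhds ht))).differentiableAt.differentiableWithinAt

lemma deriv2_ivpSolution (hq : Integrable q) (hqc : ContinuousOn q (Ioo a b)) (ht : t ∈ Ioo a b) :
    deriv (deriv (ivpSolution a A s q)) t = -q t :=
  (hasDerivAt_deriv_ivpSolution hq (hqc.continuousAt (isOpen_Ioo.mem_nhds ht))).deriv

lemma intervalIntegrable_deriv2_ivpSolution (hq : Integrable q) (hqc : ContinuousOn q (Ioo a b))
    (hab : a ≤ b) : IntervalIntegrable (deriv (deriv (ivpSolution a A s q))) volume a b := by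
  refine hq.neg.intervalIntegrable.congr_uIoo fun t ht => ?_
  rw [uIoo_of_le hab] at ht
  exact (deriv2_ivpSolution hq hqc ht).symm

lemma integral_deriv2_ivpSolution (hq : Integrable q) (hqc : ContinuousOn q (Ioo a b))
    {c d : ℝ} (hc : c ∈ Icc a b) (hd : d ∈ Icc a b) :
    ∫ t in c..d, deriv (deriv (ivpSolution a A s q)) t =
      deriv (ivpSolution a A s q) d - deriv (ivpSolution a A s q) c := by
  have hab : a ≤ b := hc.1.trans hc.2
  have hcd : uIcc c d ⊆ uIcc a b := (uIcc_of_le hab).symm ▸ uIcc_subset_Icc hc hd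
  refine integral_eq_sub_of_hasDeriv_right
    ((contDiff_ivpSolution hq).continuous_deriv le_rfl).continuousOn (fun t ht => ?_)
    ((intervalIntegrable_deriv2_ivpSolution hq hqc hab).mono_set hcd)
  have htab : t ∈ Ioo a b := Ioo_subset_Ioo (le_min hc.1 hd.1) (max_le hc.2 hd.2) ht
  exact ((differentiableOn_deriv_ivpSolution hq hqc).differentiableAt
    (isOpen_Ioo.mem_nhds htab)).hasDerivAt.hasDerivWithinAt

end IvpSolution

section Caratheodory

variable {g : ℝ → ℝ → ℝ} {k : ℝ → ℝ}

/-- `g` is a Carathéodory function: continuous in the state, measurable in time, and dominated by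
the integrable function `k` of time alone. -/
structure IsDominatedCaratheodory (g : ℝ → ℝ → ℝ) (k : ℝ → ℝ) : Prop where
  continuous : ∀ t, Continuous (g t)
  measurable : ∀ x, Measurable fun t => g t x
  bound : ∀ t x, |g t x| ≤ k t
  integrable : Integrable k

namespace IsDominatedCaratheodory

lemma integrable_comp (hg : IsDominatedCaratheodory g k) {v : ℝ → ℝ} (hv : Measurable v) :
    Integrable fun r => g r (v r) := by
  have huncurry : Measurable (Function.uncurry fun x t => g t x) :=
    measurable_uncurry_of_continuous_of_measurable hg.continuous hg.measurable
  exact hg.integrable.mono' (huncurry.comp (hv.prodMk measurable_id)).aestronglyMeasurable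
    (Eventually.of_forall fun r => hg.bound r (v r))

end IsDominatedCaratheodory

variable {a b A B δ s : ℝ}

/-- The Picard operator of the initial value problem `u'' = -g(t, u)`, `u a = A`, `u' a = s`, with
the unknown entering `g` with the delay `δ`. Delayed times are projected onto `[a, b]`, so that only
the values of `v` there matter; at `δ = 0` a fixed point solves the problem on `[a, b]`. -/
noncomputable def delayedPicard (a b A : ℝ) (g : ℝ → ℝ → ℝ) (δ s : ℝ) (v : ℝ → ℝ) : ℝ → ℝ :=
  ivpSolution a A s fun r => g r (v (clamp a b (r - δ)))

lemma delayedPicard_congr (hab : a ≤ b) {v v' : ℝ → ℝ} (h : EqOn v v' (Icc a b)) :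
    delayedPicard a b A g δ s v = delayedPicard a b A g δ s v' := by
  have hcomp (r : ℝ) : v (clamp a b (r - δ)) = v' (clamp a b (r - δ)) := h (clamp_mem_Icc hab _)
  simp only [delayedPicard, hcomp]

/-- Going from one iterate to the next, agreement propagates a further `δ` to the right, because the
operator only looks at values that are at least `δ` old. -/
lemma eqOn_iterate_delayedPicard_succ (hδ : 0 ≤ δ) (n : ℕ) :
    EqOn ((delayedPicard a b A g δ s)^[n + 1] fun _ => A)
      ((delayedPicard a b A g δ s)^[n] fun _ => A) (Icc a (a + n * δ)) := by
  induction n with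
  | zero =>
    intro t ht
    obtain rfl : t = a := by simpa using ht
    exact ivpSolution_left
  | succ n ih =>
    rw [Function.iterate_succ_apply'] at ih
    intro t ht
    rw [Function.iterate_succ_apply', Function.iterate_succ_apply' _ n]
    refine ivpSolution_congr ht.1 fun r hr => congrArg (g r) (ih ⟨le_max_left _ _, max_le ?_ ?_⟩)
    · exact le_add_of_nonneg_right (by positivity)
    · have hrt := hr.2.trans ht.2
      push_cast at hrt
      exact (min_le_right _ _).trans (by linarith)

lemma exists_isFixedPt_iterate_delayedPicard (hab : a ≤ b) (hδ : 0 < δ) :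
    ∃ n : ℕ, ∀ s, Function.IsFixedPt (delayedPicard a b A g δ s)
      ((delayedPicard a b A g δ s)^[n] fun _ => A) := by
  obtain ⟨n, hn⟩ := exists_nat_ge ((b - a) / δ)
  have hb : b ≤ a + n * δ := by linarith [(div_le_iff₀ hδ).1 hn]
  refine ⟨n + 1, fun s => ?_⟩
  have hstable := (eqOn_iterate_delayedPicard_succ (g := g) (b := b) (A := A) (s := s)
    hδ.le n).mono (Icc_subset_Icc_right hb)
  rw [Function.IsFixedPt, delayedPicard_congr hab hstable,
    ← Function.iterate_succ_apply' (delayedPicard a b A g δ s)]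

namespace IsDominatedCaratheodory

lemma lipschitzWith_delayedPicard (hg : IsDominatedCaratheodory g k) {v : ℝ → ℝ}
    (hv : Measurable v) :
    LipschitzWith (|s| + ∫ r, k r).toNNReal (delayedPicard a b A g δ s v) :=
  lipschitzWith_ivpSolution
    (hg.integrable_comp (hv.comp (continuous_clamp.measurable.comp (measurable_id.sub_const δ))))
    hg.integrable fun r => hg.bound r _

lemma tendsto_delayedPicard (hg : IsDominatedCaratheodory g k) {ι : Type*} {l : Filter ι}
    [l.IsCountablyGenerated] {D S : ι → ℝ} {V : ι → ℝ → ℝ} {v : ℝ → ℝ}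
    (hV : ∀ i, Measurable (V i)) (hS : Tendsto S l (𝓝 s))
    (hlim : ∀ r, Tendsto (fun i => V i (clamp a b (r - D i))) l (𝓝 (v (clamp a b (r - δ)))))
    (t : ℝ) :
    Tendsto (fun i => delayedPicard a b A g (D i) (S i) (V i) t) l
      (𝓝 (delayedPicard a b A g δ s v t)) :=
  tendsto_ivpSolution
    (fun i => hg.integrable_comp
      ((hV i).comp (continuous_clamp.measurable.comp (measurable_id.sub_const (D i)))))
    hg.integrable (fun _ r => hg.bound r _) hS
    (fun r => ((hg.continuous r).tendsto _).comp (hlim r)) t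

lemma continuous_iterate_delayedPicard (hg : IsDominatedCaratheodory g k) (n : ℕ) :
    Continuous ((delayedPicard a b A g δ s)^[n] fun _ => A) := by
  induction n with
  | zero => exact continuous_const
  | succ n ih =>
    rw [Function.iterate_succ_apply']
    exact (hg.lipschitzWith_delayedPicard ih.measurable).continuous

lemma continuous_iterate_delayedPicard_slope (hg : IsDominatedCaratheodory g k) (n : ℕ) (t : ℝ) :
    Continuous fun s => (delayedPicard a b A g δ s)^[n] (fun _ => A) t := by
  induction n generalizing t with
  | zero => exact continuous_const
  | succ n ih =>
    simp only [Function.iterate_succ_apply']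
    exact continuous_iff_continuousAt.2 fun s => hg.tendsto_delayedPicard
      (fun _ => (hg.continuous_iterate_delayedPicard n).measurable) tendsto_id
      (fun r => (ih _).tendsto s) t

/-- Shooting: the end value moves by `b - a` per unit of slope, up to a bounded error. -/
lemma exists_isFixedPt_delayedPicard_of_pos (hg : IsDominatedCaratheodory g k) (hab : a < b)
    (hδ : 0 < δ) :
    ∃ s v, |s - (B - A) / (b - a)| ≤ ∫ r, k r ∧ Measurable v ∧
      Function.IsFixedPt (delayedPicard a b A g δ s) v ∧ v b = B := by
  obtain ⟨n, hfix⟩ := exists_isFixedPt_iterate_delayedPicard (A := A) (g := g) hab.le hδ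
  set v : ℝ → ℝ → ℝ := fun s => (delayedPicard a b A g δ s)^[n] fun _ => A
  set m := (B - A) / (b - a)
  set K := ∫ r, k r
  have hm : m * (b - a) = B - A := div_mul_cancel₀ _ (sub_pos.2 hab).ne'
  have hK : 0 ≤ K := integral_nonneg fun r => (abs_nonneg _).trans (hg.bound r 0)
  have hv (s : ℝ) : delayedPicard a b A g δ s (v s) = v s := hfix s
  have hend (s : ℝ) : |v s b - (A + s * (b - a))| ≤ K * (b - a) := by
    have h := abs_ivpSolution_sub_le (a := a) (A := A) (s := s) hg.integrable
      (fun r => hg.bound r (v s (clamp a b (r - δ)))) b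
    rw [abs_of_pos (sub_pos.2 hab)] at h
    rwa [← hv s]
  have hleft : v (m - K) b ≤ B := by linarith [(abs_le.1 (hend (m - K))).2]
  have hright : B ≤ v (m + K) b := by linarith [(abs_le.1 (hend (m + K))).1]
  obtain ⟨s, hs, hsB⟩ := intermediate_value_Icc (by linarith : m - K ≤ m + K)
    (hg.continuous_iterate_delayedPicard_slope n b).continuousOn ⟨hleft, hright⟩
  exact ⟨s, v s, abs_sub_le_iff.2 ⟨by linarith [hs.2], by linarith [hs.1]⟩,
    (hg.continuous_iterate_delayedPicard n).measurable, hv s, hsB⟩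

end IsDominatedCaratheodory

lemma isCompact_setOf_lipschitzWith_apply_eq {X E : Type*} [PseudoMetricSpace X] [MetricSpace E]
    [ProperSpace E] (L : NNReal) (x₀ : X) (e : E) :
    IsCompact {f : C(X, E) | LipschitzWith L f ∧ f x₀ = e} := by
  refine ArzelaAscoli.isCompact_of_equicontinuous _ ?_
    (LipschitzWith.uniformEquicontinuous _ L fun f => f.2.1).equicontinuous
  have himage : ContinuousMap.toFun '' {f : C(X, E) | LipschitzWith L f ∧ f x₀ = e} =
      {f : X → E | LipschitzWith L f ∧ f x₀ = e} := by
    ext f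
    exact ⟨fun ⟨_, hF, h⟩ => h ▸ hF, fun hf => ⟨⟨f, hf.1.continuous⟩, hf, rfl⟩⟩
  rw [himage]
  refine (isCompact_univ_pi fun x => isCompact_closedBall e (L * dist x x₀)).of_isClosed_subset
    ((isClosed_setOfPred_lipschitzWith L).inter
      (isClosed_eq (continuous_apply x₀) continuous_const)) fun f hf x _ => ?_
  rw [Metric.mem_closedBall, ← hf.2]
  exact hf.1.dist_le_mul x x₀

/-- The delayed solutions `v n` for the delays `1 / (n + 1)` are equi-Lipschitz with the same value
at `b`, so a subsequence converges in the compact-open topology. -/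
lemma IsDominatedCaratheodory.exists_isFixedPt_delayedPicard_zero
    (hg : IsDominatedCaratheodory g k) (hab : a < b) :
    ∃ s u, Measurable u ∧ Function.IsFixedPt (delayedPicard a b A g 0 s) u ∧ u b = B := by
  choose s v hs hv hfix hvb using fun n : ℕ =>
    hg.exists_isFixedPt_delayedPicard_of_pos (A := A) (B := B) hab (Nat.one_div_pos_of_nat (n := n))
  set m := (B - A) / (b - a)
  set K := ∫ r, k r
  have hsabs (n : ℕ) : |s n| ≤ |m| + K := by
    linarith [abs_sub_abs_le_abs_sub (s n) m, hs n]
  have hLip (n : ℕ) : LipschitzWith (|m| + K + K).toNNReal (v n) := by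
    rw [← hfix n]
    exact (hg.lipschitzWith_delayedPicard (hv n)).weaken
      (Real.toNNReal_mono (add_le_add_left (hsabs n) K))
  obtain ⟨⟨U, σ⟩, ⟨⟨-, hUb⟩, -⟩, φ, hφ, hlim⟩ :=
    ((isCompact_setOf_lipschitzWith_apply_eq (|m| + K + K).toNNReal b B).prod
      (isCompact_Icc (a := -(|m| + K)) (b := |m| + K))).tendsto_subseq
      (x := fun n => (⟨v n, (hLip n).continuous⟩, s n))
      fun n => ⟨⟨hLip n, hvb n⟩, abs_le.1 (hsabs n)⟩
  obtain ⟨hlimU, hlimσ⟩ := Prod.tendsto_iff _ _ |>.1 hlim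
  refine ⟨σ, U, U.continuous.measurable, funext fun t => ?_, hUb⟩
  have hδ : Tendsto (fun n => 1 / ((φ n : ℝ) + 1)) atTop (𝓝 0) :=
    tendsto_one_div_add_atTop_nhds_zero_nat.comp hφ.tendsto_atTop
  refine tendsto_nhds_unique ?_ (hlimU.eval_const t)
  refine (hg.tendsto_delayedPicard (fun n => hv (φ n)) hlimσ (fun r => ?_) t).congr
    fun n => congrFun (hfix (φ n)) t
  exact hlimU.eval ((continuous_clamp.tendsto _).comp (tendsto_const_nhds.sub hδ))

lemma IsDominatedCaratheodory.exists_ivpSolution_eq (hg : IsDominatedCaratheodory g k)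
    (hab : a < b) (A B : ℝ) :
    ∃ s q, Integrable q ∧ ivpSolution a A s q b = B ∧
      ∀ t ∈ Icc a b, q t = g t (ivpSolution a A s q t) := by
  obtain ⟨s, u, hu, hfix, hub⟩ := hg.exists_isFixedPt_delayedPicard_zero (A := A) (B := B) hab
  have hsol : ivpSolution a A s (fun r => g r (u (clamp a b (r - 0)))) = u := hfix
  refine ⟨s, fun r => g r (u (clamp a b (r - 0))), hg.integrable_comp
    (hu.comp (continuous_clamp.measurable.comp (measurable_id.sub_const 0))), ?_, fun t ht => ?_⟩
  · rw [hsol, hub]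
  · rw [hsol]
    simp only [sub_zero, clamp_of_mem_Icc ht]

end Caratheodory

section Comparison

variable {a b A B s t : ℝ} {p σ q : ℝ → ℝ} {f : ℝ → ℝ → ℝ}

lemma exists_pos_on_Ioo_of_nonpos_endpoints {φ : ℝ → ℝ} (hφ : ContinuousOn φ (Icc a b))
    (ht : t ∈ Icc a b) (ha : φ a ≤ 0) (hb : φ b ≤ 0) :
    ∃ c ∈ Icc a t, ∃ d ∈ Icc t b, φ c ≤ 0 ∧ φ d ≤ 0 ∧ ∀ x ∈ Ioo c d, 0 < φ x := by
  have hcompact {x y : ℝ} (hxy : Icc x y ⊆ Icc a b) : IsCompact (Icc x y ∩ {z | φ z ≤ 0}) :=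
    isCompact_Icc.of_isClosed_subset (isClosed_Icc.isClosed_le (hφ.mono hxy) continuousOn_const)
      inter_subset_left
  obtain ⟨c, ⟨hc, hφc⟩, hcmax⟩ := (hcompact (Icc_subset_Icc_right ht.2)).exists_isGreatest
    ⟨a, left_mem_Icc.2 ht.1, ha⟩
  obtain ⟨d, ⟨hd, hφd⟩, hdmin⟩ := (hcompact (Icc_subset_Icc_left ht.1)).exists_isLeast
    ⟨b, right_mem_Icc.2 ht.2, hb⟩
  refine ⟨c, hc, d, hd, hφc, hφd, fun x hx => not_le.1 fun hφx => ?_⟩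
  rcases le_total x t with hxt | htx
  · exact (hcmax ⟨⟨hc.1.trans hx.1.le, hxt⟩, hφx⟩).not_gt hx.1
  · exact (hdmin ⟨⟨htx, hx.2.le.trans hd.2⟩, hφx⟩).not_gt hx.2

/-- A maximum principle: between the zeros of `v - w` around a point where it is positive, `v - w`
is convex, hence bounded by its nonpositive values at these zeros. -/
lemma le_of_deriv2_le_of_lt {v w : ℝ → ℝ} (hv : ContinuousOn v (Icc a b))
    (hw : ContinuousOn w (Icc a b)) (hv1 : DifferentiableOn ℝ v (Ioo a b))
    (hw1 : DifferentiableOn ℝ w (Ioo a b)) (hv2 : DifferentiableOn ℝ (deriv v) (Ioo a b))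
    (hw2 : DifferentiableOn ℝ (deriv w) (Ioo a b))
    (h : ∀ t ∈ Ioo a b, w t < v t → deriv (deriv w) t ≤ deriv (deriv v) t)
    (ha : v a ≤ w a) (hb : v b ≤ w b) : ∀ t ∈ Icc a b, v t ≤ w t := by
  intro t ht
  obtain ⟨c, hc, d, hd, hφc, hφd, hpos⟩ := exists_pos_on_Ioo_of_nonpos_endpoints (hv.sub hw) ht
    (sub_nonpos.2 ha) (sub_nonpos.2 hb)
  have hsub : Ioo c d ⊆ Ioo a b := Ioo_subset_Ioo hc.1 hd.2
  have hderiv {φ : ℝ → ℝ} (hφ : DifferentiableOn ℝ φ (Ioo a b)) :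
      ∀ x ∈ Ioo c d, HasDerivWithinAt φ (deriv φ x) (Ioo c d) x := fun x hx =>
    (hφ.differentiableAt (isOpen_Ioo.mem_nhds (hsub hx))).hasDerivAt.hasDerivWithinAt
  have hconvex : ConvexOn ℝ (Icc c d) (v - w) := by
    refine convexOn_of_hasDerivWithinAt2_nonneg (f' := deriv v - deriv w)
      (f'' := deriv (deriv v) - deriv (deriv w)) (convex_Icc c d)
      ((hv.sub hw).mono (Icc_subset_Icc hc.1 hd.2)) ?_ ?_ ?_ <;> rw [interior_Icc] <;> intro x hx
    · exact (hderiv hv1 x hx).sub (hderiv hw1 x hx)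
    · exact (hderiv hv2 x hx).sub (hderiv hw2 x hx)
    · exact sub_nonneg.2 (h x (hsub hx) (sub_pos.1 (hpos x hx)))
  have hcd : c ≤ d := hc.2.trans hd.1
  exact sub_nonpos.1 ((hconvex.le_max_of_mem_Icc (left_mem_Icc.2 hcd) (right_mem_Icc.2 hcd)
    ⟨hc.2, hd.1⟩).trans (max_le hφc hφd))

/-- `σ` is a lower solution of `p u'' + f(t, u) = 0`, `u a = A`, `u b = B`; for the conformable
derivative, `p t = (t - a) ^ (2 - α)`. Regularity is required at interior points only, where
`deriv` is not affected by values outside `[a, b]`. -/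
structure IsLowerSolution (p : ℝ → ℝ) (f : ℝ → ℝ → ℝ) (a b A B : ℝ) (σ : ℝ → ℝ) : Prop where
  continuousOn : ContinuousOn σ (Icc a b)
  differentiableOn : DifferentiableOn ℝ σ (Ioo a b)
  differentiableOn_deriv : DifferentiableOn ℝ (deriv σ) (Ioo a b)
  nonneg : ∀ t ∈ Ioo a b, 0 ≤ p t * deriv (deriv σ) t + f t (σ t)
  left_le : σ a ≤ A
  right_le : σ b ≤ B

/-- `σ` is an upper solution of `p u'' + f(t, u) = 0`, `u a = A`, `u b = B`, with the same
conventions as in `IsLowerSolution`. -/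
structure IsUpperSolution (p : ℝ → ℝ) (f : ℝ → ℝ → ℝ) (a b A B : ℝ) (σ : ℝ → ℝ) : Prop where
  continuousOn : ContinuousOn σ (Icc a b)
  differentiableOn : DifferentiableOn ℝ σ (Ioo a b)
  differentiableOn_deriv : DifferentiableOn ℝ (deriv σ) (Ioo a b)
  nonpos : ∀ t ∈ Ioo a b, p t * deriv (deriv σ) t + f t (σ t) ≤ 0
  le_left : A ≤ σ a
  le_right : B ≤ σ b

lemma IsLowerSolution.le_ivpSolution (hσ : IsLowerSolution p f a b A B σ)
    (hp : ∀ t ∈ Ioo a b, 0 < p t) (hq : Integrable q) (hqc : ContinuousOn q (Ioo a b))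
    (hqσ : ∀ t ∈ Ioo a b, ivpSolution a A s q t < σ t → f t (σ t) ≤ p t * q t)
    (hb : B ≤ ivpSolution a A s q b) : ∀ t ∈ Icc a b, σ t ≤ ivpSolution a A s q t := by
  have hu := contDiff_ivpSolution (a := a) (A := A) (s := s) hq
  refine le_of_deriv2_le_of_lt hσ.continuousOn hu.continuous.continuousOn hσ.differentiableOn
    (hu.differentiable one_ne_zero).differentiableOn hσ.differentiableOn_deriv
    (differentiableOn_deriv_ivpSolution hq hqc) (fun t ht hlt => ?_)
    (hσ.left_le.trans_eq ivpSolution_left.symm) (hσ.right_le.trans hb)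
  rw [deriv2_ivpSolution hq hqc ht]
  exact le_of_mul_le_mul_left (by linarith [hσ.nonneg t ht, hqσ t ht hlt]) (hp t ht)

lemma IsUpperSolution.ivpSolution_le (hσ : IsUpperSolution p f a b A B σ)
    (hp : ∀ t ∈ Ioo a b, 0 < p t) (hq : Integrable q) (hqc : ContinuousOn q (Ioo a b))
    (hqσ : ∀ t ∈ Ioo a b, σ t < ivpSolution a A s q t → p t * q t ≤ f t (σ t))
    (hb : ivpSolution a A s q b ≤ B) : ∀ t ∈ Icc a b, ivpSolution a A s q t ≤ σ t := by
  have hu := contDiff_ivpSolution (a := a) (A := A) (s := s) hq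
  refine le_of_deriv2_le_of_lt hu.continuous.continuousOn hσ.continuousOn
    (hu.differentiable one_ne_zero).differentiableOn hσ.differentiableOn
    (differentiableOn_deriv_ivpSolution hq hqc) hσ.differentiableOn_deriv (fun t ht hlt => ?_)
    (ivpSolution_left.trans_le hσ.le_left) (hb.trans hσ.le_right)
  rw [deriv2_ivpSolution hq hqc ht]
  exact le_of_mul_le_mul_left (by linarith [hσ.nonpos t ht, hqσ t ht hlt]) (hp t ht)

end Comparison

section Truncation

variable {a b : ℝ} {σl σu k : ℝ → ℝ} {h : ℝ → ℝ → ℝ}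

/-- The points over `S` between the graphs of `σl` and `σu`, graphs included; the closed
counterpart of `regionBetween`. -/
def closedRegionBetween {X : Type*} (σl σu : X → ℝ) (S : Set X) : Set (X × ℝ) :=
  {z | z.1 ∈ S ∧ σl z.1 ≤ z.2 ∧ z.2 ≤ σu z.1}

lemma isCompact_closedRegionBetween {X : Type*} [TopologicalSpace X] [T2Space X]
    {σl σu : X → ℝ} {S : Set X} (hS : IsCompact S) (hσl : ContinuousOn σl S)
    (hσu : ContinuousOn σu S) : IsCompact (closedRegionBetween σl σu S) := by
  obtain ⟨m, hm⟩ := hS.bddBelow_image hσl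
  obtain ⟨M, hM⟩ := hS.bddAbove_image hσu
  have hbox : IsCompact (S ×ˢ Icc m M) := hS.prod isCompact_Icc
  have hfst : MapsTo Prod.fst (S ×ˢ Icc m M) S := fun z hz => hz.1
  have hclosed : IsClosed ({z ∈ S ×ˢ Icc m M | σl z.1 ≤ z.2} ∩ {z ∈ S ×ˢ Icc m M | z.2 ≤ σu z.1}) :=
    (hbox.isClosed.isClosed_le (hσl.comp continuousOn_fst hfst) continuousOn_snd).inter
      (hbox.isClosed.isClosed_le continuousOn_snd (hσu.comp continuousOn_fst hfst))
  have heq : closedRegionBetween σl σu S =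
      {z ∈ S ×ˢ Icc m M | σl z.1 ≤ z.2} ∩ {z ∈ S ×ˢ Icc m M | z.2 ≤ σu z.1} := by
    ext ⟨t, x⟩
    constructor
    · rintro ⟨ht, hl, hu⟩
      have hx : x ∈ Icc m M :=
        ⟨(hm (mem_image_of_mem σl ht)).trans hl, hu.trans (hM (mem_image_of_mem σu ht))⟩
      exact ⟨⟨⟨ht, hx⟩, hl⟩, ⟨ht, hx⟩, hu⟩
    · rintro ⟨⟨⟨ht, -⟩, hl⟩, -, hu⟩
      exact ⟨ht, hl, hu⟩
  rw [heq]
  exact hbox.of_isClosed_subset hclosed fun z hz => hz.1.1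

/-- The modification of `h` used to find solutions between `σl` and `σu`: its state argument is
projected onto `[σl t, σu t]`, and it vanishes for times outside `(a, b)`. -/
noncomputable def truncatedField (a b : ℝ) (σl σu : ℝ → ℝ) (h : ℝ → ℝ → ℝ) (t x : ℝ) : ℝ :=
  (Ioo a b).indicator (fun τ => h τ (clamp (σl τ) (σu τ) x)) t

lemma truncatedField_of_mem_Ioo {t : ℝ} (ht : t ∈ Ioo a b) (x : ℝ) :
    truncatedField a b σl σu h t x = h t (clamp (σl t) (σu t) x) :=
  indicator_of_mem ht _

lemma truncatedField_of_notMem_Ioo {t : ℝ} (ht : t ∉ Ioo a b) (x : ℝ) :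
    truncatedField a b σl σu h t x = 0 :=
  indicator_of_notMem ht _

lemma continuousOn_truncatedField_comp (hσl : ContinuousOn σl (Ioo a b))
    (hσu : ContinuousOn σu (Ioo a b)) (hle : ∀ t ∈ Ioo a b, σl t ≤ σu t)
    (hh : ContinuousOn (fun z : ℝ × ℝ => h z.1 z.2) (closedRegionBetween σl σu (Ioo a b)))
    {v : ℝ → ℝ} (hv : ContinuousOn v (Ioo a b)) :
    ContinuousOn (fun t => truncatedField a b σl σu h t (v t)) (Ioo a b) :=
  (hh.comp (f := fun t => (t, clamp (σl t) (σu t) (v t)))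
    (continuousOn_id.prodMk (hσl.sup (hσu.inf hv)))
    fun t ht => ⟨ht, clamp_mem_Icc (hle t ht) (v t)⟩).congr
      fun _ ht => truncatedField_of_mem_Ioo ht _

lemma isDominatedCaratheodory_truncatedField (hσl : ContinuousOn σl (Ioo a b))
    (hσu : ContinuousOn σu (Ioo a b)) (hle : ∀ t ∈ Ioo a b, σl t ≤ σu t)
    (hh : ContinuousOn (fun z : ℝ × ℝ => h z.1 z.2) (closedRegionBetween σl σu (Ioo a b)))
    (hk : IntegrableOn k (Ioo a b))
    (hhk : ∀ z ∈ closedRegionBetween σl σu (Ioo a b), |h z.1 z.2| ≤ k z.1) :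
    IsDominatedCaratheodory (truncatedField a b σl σu h) ((Ioo a b).indicator k) where
  continuous t := by
    by_cases ht : t ∈ Ioo a b
    · rw [funext (truncatedField_of_mem_Ioo ht)]
      exact hh.comp_continuous (continuous_const.prodMk continuous_clamp)
        fun x => ⟨ht, clamp_mem_Icc (hle t ht) x⟩
    · rw [funext (truncatedField_of_notMem_Ioo ht)]
      exact continuous_const
  measurable x := by
    classical
    have hx := continuousOn_truncatedField_comp hσl hσu hle hh (continuousOn_const (c := x))
    convert hx.measurable_piecewise (continuousOn_const (c := 0)) measurableSet_Ioo using 1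
    ext t
    by_cases ht : t ∈ Ioo a b <;> simp [truncatedField, ht]
  bound t x := by
    by_cases ht : t ∈ Ioo a b
    · rw [truncatedField_of_mem_Ioo ht, indicator_of_mem ht]
      exact hhk (t, _) ⟨ht, clamp_mem_Icc (hle t ht) x⟩
    · rw [truncatedField_of_notMem_Ioo ht, abs_zero, indicator_of_notMem ht]
  integrable := hk.integrable_indicator measurableSet_Ioo

lemma exists_ivpSolution_eq_comp_clamp (hab : a < b) (A B : ℝ) (hσl : ContinuousOn σl (Ioo a b))
    (hσu : ContinuousOn σu (Ioo a b)) (hle : ∀ t ∈ Ioo a b, σl t ≤ σu t)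
    (hh : ContinuousOn (fun z : ℝ × ℝ => h z.1 z.2) (closedRegionBetween σl σu (Ioo a b)))
    (hk : IntegrableOn k (Ioo a b))
    (hhk : ∀ z ∈ closedRegionBetween σl σu (Ioo a b), |h z.1 z.2| ≤ k z.1) :
    ∃ s q, Integrable q ∧ ContinuousOn q (Ioo a b) ∧ ivpSolution a A s q b = B ∧
      ∀ t ∈ Ioo a b, q t = h t (clamp (σl t) (σu t) (ivpSolution a A s q t)) := by
  obtain ⟨s, q, hq, hqb, hqu⟩ :=
    (isDominatedCaratheodory_truncatedField hσl hσu hle hh hk hhk).exists_ivpSolution_eq hab A B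
  have hu : ContinuousOn (ivpSolution a A s q) (Ioo a b) :=
    (contDiff_ivpSolution hq).continuous.continuousOn
  refine ⟨s, q, hq, ?_, hqb, fun t ht => ?_⟩
  · exact (continuousOn_truncatedField_comp hσl hσu hle hh hu).congr
      fun t ht => hqu t (Ioo_subset_Icc_self ht)
  · rw [hqu t (Ioo_subset_Icc_self ht), truncatedField_of_mem_Ioo ht]

end Truncation

section Weight

variable {a b β : ℝ}

lemma continuousOn_sub_rpow : ContinuousOn (fun t => (t - a) ^ β) (Ioo a b) :=
  (continuous_sub_right a).continuousOn.rpow_const fun _ ht => Or.inl (sub_pos.2 ht.1).ne'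

lemma integrableOn_sub_rpow_inv (hab : a ≤ b) (hβ : β < 1) :
    IntegrableOn (fun t => ((t - a) ^ β)⁻¹) (Ioo a b) := by
  have hint : IntervalIntegrable (fun t => (t - a) ^ (-β)) volume a b := by
    simpa using (intervalIntegrable_rpow' (a := 0) (b := b - a) (neg_lt_neg hβ)).comp_sub_right a
  rw [intervalIntegrable_iff_integrableOn_Ioo_of_le hab] at hint
  exact hint.congr_fun (fun t ht => Real.rpow_neg (sub_pos.2 ht.1).le β) measurableSet_Ioo

end Weight

lemma exists_ivpSolution_between {a b A B : ℝ} {p σl σu : ℝ → ℝ} {f : ℝ → ℝ → ℝ} (hab : a < b)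
    (hp : ContinuousOn p (Ioo a b)) (hp0 : ∀ t ∈ Ioo a b, 0 < p t)
    (hpint : IntegrableOn (fun t => (p t)⁻¹) (Ioo a b))
    (hσl : IsLowerSolution p f a b A B σl) (hσu : IsUpperSolution p f a b A B σu)
    (hle : ∀ t ∈ Icc a b, σl t ≤ σu t)
    (hf : ContinuousOn (fun z : ℝ × ℝ => f z.1 z.2) (closedRegionBetween σl σu (Icc a b))) :
    ∃ s q, Integrable q ∧ ContinuousOn q (Ioo a b) ∧ ivpSolution a A s q b = B ∧
      (∀ t ∈ Ioo a b, p t * q t = f t (ivpSolution a A s q t)) ∧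
      ∀ t ∈ Icc a b, ivpSolution a A s q t ∈ Icc (σl t) (σu t) := by
  have hsub : Ioo a b ⊆ Icc a b := Ioo_subset_Icc_self
  have hregion : closedRegionBetween σl σu (Ioo a b) ⊆ closedRegionBetween σl σu (Icc a b) :=
    fun z hz => ⟨hsub hz.1, hz.2⟩
  obtain ⟨M, hM⟩ := (isCompact_closedRegionBetween isCompact_Icc hσl.continuousOn
    hσu.continuousOn).exists_bound_of_continuousOn hf
  obtain ⟨s, q, hq, hqc, hqb, hqu⟩ := exists_ivpSolution_eq_comp_clamp
    (h := fun t x => (p t)⁻¹ * f t x) hab A B (hσl.continuousOn.mono hsub)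
    (hσu.continuousOn.mono hsub) (fun t ht => hle t (hsub ht))
    (((hp.inv₀ fun t ht => (hp0 t ht).ne').comp continuousOn_fst fun _ hz => hz.1).mul
      (hf.mono hregion))
    (hpint.mul_const M) fun z hz => by
      rw [abs_mul, abs_of_pos (inv_pos.2 (hp0 z.1 hz.1))]
      exact mul_le_mul_of_nonneg_left (hM z (hregion hz)) (inv_pos.2 (hp0 z.1 hz.1)).le
  have hpq : ∀ t ∈ Ioo a b, p t * q t = f t (clamp (σl t) (σu t) (ivpSolution a A s q t)) :=
    fun t ht => by rw [hqu t ht, mul_inv_cancel_left₀ (hp0 t ht).ne']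
  have hlower := hσl.le_ivpSolution hp0 hq hqc
    (fun t ht hlt => by rw [hpq t ht, clamp_of_le_left hlt.le]) hqb.ge
  have hupper := hσu.ivpSolution_le hp0 hq hqc
    (fun t ht hlt => by rw [hpq t ht, clamp_of_right_le (hle t (hsub ht)) hlt.le]) hqb.le
  refine ⟨s, q, hq, hqc, hqb, fun t ht => ?_, fun t ht => ⟨hlower t ht, hupper t ht⟩⟩
  rw [hpq t ht, clamp_of_mem_Icc ⟨hlower t (hsub ht), hupper t (hsub ht)⟩]

theorem exists_solution_between_lower_and_upper_general {a b A B : ℝ} {p σl σu : ℝ → ℝ}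
    {f : ℝ → ℝ → ℝ} (hab : a < b) (hp : ContinuousOn p (Ioo a b)) (hp0 : ∀ t ∈ Ioo a b, 0 < p t)
    (hpint : IntegrableOn (fun t => (p t)⁻¹) (Ioo a b))
    (hσl : IsLowerSolution p f a b A B σl) (hσu : IsUpperSolution p f a b A B σu)
    (hle : ∀ t ∈ Icc a b, σl t ≤ σu t)
    (hf : ContinuousOn (fun z : ℝ × ℝ => f z.1 z.2) (closedRegionBetween σl σu (Icc a b))) :
    ∃ u : ℝ → ℝ,
      ContDiffOn ℝ 1 u (Icc a b) ∧
      IntervalIntegrable (deriv (deriv u)) volume a b ∧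
      (∀ c ∈ Icc a b, ∀ d ∈ Icc a b, deriv u d - deriv u c = ∫ t in c..d, deriv (deriv u) t) ∧
      (∀ t ∈ Ioo a b, DifferentiableAt ℝ (deriv u) t) ∧
      (∀ t ∈ Ioo a b, p t * deriv (deriv u) t + f t (u t) = 0) ∧
      u a = A ∧ u b = B ∧ ∀ t ∈ Icc a b, σl t ≤ u t ∧ u t ≤ σu t := by
  obtain ⟨s, q, hq, hqc, hqb, hode, hbetween⟩ :=
    exists_ivpSolution_between hab hp hp0 hpint hσl hσu hle hf
  refine ⟨ivpSolution a A s q, (contDiff_ivpSolution hq).contDiffOn,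
    intervalIntegrable_deriv2_ivpSolution hq hqc hab.le,
    fun c hc d hd => (integral_deriv2_ivpSolution hq hqc hc hd).symm,
    fun t ht => (differentiableOn_deriv_ivpSolution hq hqc).differentiableAt
      (isOpen_Ioo.mem_nhds ht), fun t ht => ?_, ivpSolution_left, hqb, hbetween⟩
  rw [deriv2_ivpSolution hq hqc ht, ← hode t ht]
  ring

/-- Upper and lower solutions method for the conformable Dirichlet problem
`(t-a)^(2-α) u'' + f(t,u) = 0`, `u(a) = u(b) = 0`: given a lower solution `σl`
and an upper solution `σu` with `σl ≤ σu`, both in `AC²[a,b]` (C¹ with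
absolutely continuous first derivative, encoded via the FTC for the second
derivative) and twice differentiable on `(a,b)`, and `f` continuous on the
region `E` between `σl` and `σu`, there exists a solution `u` of the same
regularity with `σl ≤ u ≤ σu` on `[a,b]`. -/
theorem exists_solution_between_lower_and_upper
    (a b α : ℝ) (hab : a < b) (hα1 : 1 < α) (hα2 : α < 2)
    (σl σu : ℝ → ℝ) (f : ℝ → ℝ → ℝ)
    (hσl1 : ContDiffOn ℝ 1 σl (Set.Icc a b))
    (hσlint : IntervalIntegrable (deriv (deriv σl)) volume a b)
    (hσlFTC : ∀ c ∈ Set.Icc a b, ∀ d ∈ Set.Icc a b,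
      deriv σl d - deriv σl c = ∫ s in c..d, deriv (deriv σl) s)
    (hσl2 : ∀ t ∈ Set.Ioo a b, DifferentiableAt ℝ (deriv σl) t)
    (hσu1 : ContDiffOn ℝ 1 σu (Set.Icc a b))
    (hσuint : IntervalIntegrable (deriv (deriv σu)) volume a b)
    (hσuFTC : ∀ c ∈ Set.Icc a b, ∀ d ∈ Set.Icc a b,
      deriv σu d - deriv σu c = ∫ s in c..d, deriv (deriv σu) s)
    (hσu2 : ∀ t ∈ Set.Ioo a b, DifferentiableAt ℝ (deriv σu) t)
    (hle : ∀ t ∈ Set.Icc a b, σl t ≤ σu t)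
    (hf : ContinuousOn (fun p : ℝ × ℝ => f p.1 p.2)
      {p : ℝ × ℝ | p.1 ∈ Set.Icc a b ∧ σl p.1 ≤ p.2 ∧ p.2 ≤ σu p.1})
    (hlow : ∀ t ∈ Set.Ioo a b,
      0 ≤ (t - a) ^ (2 - α) * deriv (deriv σl) t + f t (σl t))
    (hla : σl a ≤ 0) (hlb : σl b ≤ 0)
    (hup : ∀ t ∈ Set.Ioo a b,
      (t - a) ^ (2 - α) * deriv (deriv σu) t + f t (σu t) ≤ 0)
    (hua : 0 ≤ σu a) (hub : 0 ≤ σu b) :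
    ∃ u : ℝ → ℝ,
      ContDiffOn ℝ 1 u (Set.Icc a b) ∧
      IntervalIntegrable (deriv (deriv u)) volume a b ∧
      (∀ c ∈ Set.Icc a b, ∀ d ∈ Set.Icc a b,
        deriv u d - deriv u c = ∫ s in c..d, deriv (deriv u) s) ∧
      (∀ t ∈ Set.Ioo a b, DifferentiableAt ℝ (deriv u) t) ∧
      (∀ t ∈ Set.Ioo a b,
        (t - a) ^ (2 - α) * deriv (deriv u) t + f t (u t) = 0) ∧
      u a = 0 ∧ u b = 0 ∧
      ∀ t ∈ Set.Icc a b, σl t ≤ u t ∧ u t ≤ σu t := by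
  exact exists_solution_between_lower_and_upper_general hab continuousOn_sub_rpow
    (fun t ht => Real.rpow_pos_of_pos (sub_pos.2 ht.1) _)
    (integrableOn_sub_rpow_inv hab.le (by linarith))
    ⟨hσl1.continuousOn, (hσl1.differentiableOn one_ne_zero).mono Ioo_subset_Icc_self,
      fun t ht => (hσl2 t ht).differentiableWithinAt, hlow, hla, hlb⟩
    ⟨hσu1.continuousOn, (hσu1.differentiableOn one_ne_zero).mono Ioo_subset_Icc_self,
      fun t ht => (hσu2 t ht).differentiableWithinAt, hup, hua, hub⟩ hle hf
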